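/- arXiv:1810.03267 — 2 statements merged into one kernel-verified Lean document; each statement's English description precedes it below -/
import Mathlib

section
/- Let ρ be a separable two-qubit density matrix, i.e., ρ = ∑_{i=1}^{n} pᵢ σᵢ^A ⊗ σᵢ^B for some probabilities pᵢ and 2×2 density matrices σᵢ^A, σᵢ^B. Then the basis-optimized key rate is nonpositive: sup over 2×2 unitaries U_A, U_B of K((U_A⊗U_B)ρ(U_A⊗U_B)†) ≤ 0. -/
/-!
A separable state `ρ = ∑ pᵢ Aᵢ ⊗ Bᵢ` is positive semidefinite and so is its partial transpose
`∑ pᵢ Aᵢ ⊗ Bᵢᵀ`, and a local change of basis keeps the state separable. It therefore suffices to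
show `K(ρ) ≤ 0` for states with positive partial transpose (`keyRate_nonpos_of_ppt`).

The dephased state is a direct sum of an even parity block with diagonal `p, q`, off-diagonal `z`
and an odd parity block with diagonal `r, t`, off-diagonal `w`. Positivity of the state and of its
partial transpose give `|z|², |w|² ≤ min (p q) (r t)`. With `x, y` and `u, v` the eigenvalues
of the blocks, `e = r + t` and `G = negMulLog`, the claim becomes
`G p + G q + G r + G t ≤ G x + G y + G u + G v + H(e)` (`xstate_entropy_le`).

Assume `r t ≤ p q`; the other case is symmetric. At fixed sum `s`, the entropy `G a + G b` of a
pair is a concave increasing function of the product `a b`, with value `G s` at product zero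
(`concaveOn_binEntropy_sqrt`, which rests on the power series of `log ((1 + d) / (1 - d))`).
Since `x y ≥ p q - r t`, monotonicity and concavity give
`G p + G q + G (p + q) ≤ G x + G y + G p' + G q'`, where `p' + q' = p + q` and `p' q' = r t`
(`pair_entropy_mono`, `pair_entropy_subadd`). The distribution `(p', r; t, q')` on
two bits is then a product distribution whose parity is odd with probability `e`, so its entropy
is at most `2 H(e)`: the parity of two independent bits has at least the entropy of each of them
(`product_entropy_le`). Finally `G e ≤ G u + G v` and `H(e) = G e + G (p + q)`.
-/

open Matrix Complex Kronecker
open scoped ComplexOrder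

noncomputable section

/-- von Neumann entropy (base 2), via eigenvalues; junk value 0 if not Hermitian. -/
noncomputable def vnEntropy {n : Type*} [Fintype n] [DecidableEq n] (ρ : Matrix n n ℂ) : ℝ :=
  if h : ρ.IsHermitian then -∑ i, h.eigenvalues i * Real.logb 2 (h.eigenvalues i) else 0

/-- The diagonal part of a matrix. -/
def diagPart {n : Type*} [Fintype n] [DecidableEq n] (ρ : Matrix n n ℂ) : Matrix n n ℂ :=
  Matrix.diagonal fun i => ρ i i

/-- Relative entropy of coherence in the computational basis. -/
noncomputable def relEntCoh {n : Type*} [Fintype n] [DecidableEq n] (ρ : Matrix n n ℂ) : ℝ :=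
  vnEntropy (diagPart ρ) - vnEntropy ρ

/-- A density matrix: positive semidefinite with trace one. -/
def IsDensity {n : Type*} [Fintype n] [DecidableEq n] (ρ : Matrix n n ℂ) : Prop :=
  ρ.PosSemidef ∧ ρ.trace = 1

/-- Two-qubit index type: the first component is qubit A, the second is qubit B. -/
abbrev Q2 := Fin 2 × Fin 2

/-- Z-parity projector Π⁺ = |00⟩⟨00| + |11⟩⟨11|. -/
def PiPlus : Matrix Q2 Q2 ℂ := Matrix.diagonal fun i => if i.1 = i.2 then 1 else 0

/-- Z-parity projector Π⁻ = |01⟩⟨01| + |10⟩⟨10|. -/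
def PiMinus : Matrix Q2 Q2 ℂ := Matrix.diagonal fun i => if i.1 = i.2 then 0 else 1

/-- Partial dephasing channel Φ(ρ) = Π⁺ρΠ⁺ + Π⁻ρΠ⁻. -/
def dephase (ρ : Matrix Q2 Q2 ℂ) : Matrix Q2 Q2 ℂ :=
  PiPlus * ρ * PiPlus + PiMinus * ρ * PiMinus

/-- Binary entropy (base 2). -/
noncomputable def binEnt (e : ℝ) : ℝ := -(e * Real.logb 2 e) - (1 - e) * Real.logb 2 (1 - e)

/-- X-basis projector Π_x⁻ = |+−⟩⟨+−| + |−+⟩⟨−+|, written entrywise. -/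
def PiXMinus : Matrix Q2 Q2 ℂ :=
  Matrix.of fun i j => (1/4 : ℂ) *
    ((if i.1 = j.1 then 1 else -1) + (if i.2 = j.2 then 1 else -1))

/-- phase i^a for a : Fin 2 -/
def yph : Fin 2 → ℂ := fun a => if a = 0 then 1 else Complex.I

/-- Y-basis projector Π_y⁻ = |+i,+i⟩⟨+i,+i| + |−i,−i⟩⟨−i,−i|, written entrywise. -/
def PiYMinus : Matrix Q2 Q2 ℂ :=
  Matrix.of fun i j => (1/4 : ℂ) *
    (yph i.1 * yph i.2 * star (yph j.1) * star (yph j.2)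
      + star (yph i.1) * star (yph i.2) * yph j.1 * yph j.2)

/-- The matrix ρ(a,b): diagonal (m00,m11,m22,m33), entry a between |00⟩,|11⟩,
entry b between |01⟩,|10⟩, zeros elsewhere. -/
def rhoGen (m00 m11 m22 m33 a b : ℝ) : Matrix Q2 Q2 ℂ :=
  Matrix.of fun i j =>
    if i = j then
      (if i = (0, 0) then (m00 : ℂ) else if i = (0, 1) then (m11 : ℂ)
        else if i = (1, 0) then (m22 : ℂ) else (m33 : ℂ))
    else if (i = ((0 : Fin 2), (0 : Fin 2)) ∧ j = (1, 1)) ∨ (i = (1, 1) ∧ j = (0, 0)) then (a : ℂ)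
    else if (i = ((0 : Fin 2), (1 : Fin 2)) ∧ j = (1, 0)) ∨ (i = (1, 0) ∧ j = (0, 1)) then (b : ℂ)
    else 0

/-- The Bell-diagonal state with weights p0,p1,p2,p3 on |Φ⁺⟩,|Φ⁻⟩,|Ψ⁺⟩,|Ψ⁻⟩. -/
def bellDiag (p0 p1 p2 p3 : ℝ) : Matrix Q2 Q2 ℂ :=
  rhoGen ((p0 + p1)/2) ((p2 + p3)/2) ((p2 + p3)/2) ((p0 + p1)/2) ((p0 - p1)/2) ((p2 - p3)/2)

/-- Partial trace over the first qubit (A). -/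
def trA (M : Matrix Q2 Q2 ℂ) : Matrix (Fin 2) (Fin 2) ℂ :=
  Matrix.of fun j j' => ∑ i : Fin 2, M (i, j) (i, j')

/-- Partial trace over the second qubit (B). -/
def trB (M : Matrix Q2 Q2 ℂ) : Matrix (Fin 2) (Fin 2) ℂ :=
  Matrix.of fun i i' => ∑ j : Fin 2, M (i, j) (i', j)

/-- Coherence-based key-rate functional K(ρ) = C(Φ(ρ)) − H(Tr(Π⁻ρ)). -/
noncomputable def keyRate (ρ : Matrix Q2 Q2 ℂ) : ℝ :=
  relEntCoh (dephase ρ) - binEnt ((PiMinus * ρ).trace.re)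

/-- Outer product |ψ⟩⟨ψ|. -/
def outer (ψ : Q2 → ℂ) : Matrix Q2 Q2 ℂ := Matrix.of fun i j => ψ i * star (ψ j)

/-- Basis-optimized key rate: supremum of K over all local basis changes. -/
noncomputable def Km (ρ : Matrix Q2 Q2 ℂ) : ℝ :=
  sSup {x : ℝ | ∃ U V : Matrix (Fin 2) (Fin 2) ℂ, U ∈ Matrix.unitaryGroup (Fin 2) ℂ ∧
    V ∈ Matrix.unitaryGroup (Fin 2) ℂ ∧ x = keyRate ((U ⊗ₖ V) * ρ * (U ⊗ₖ V)ᴴ)}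



/-! ### Scalar entropy inequalities -/

/-- Two-point majorization: a concave function has a larger sum at the inner pair of points. -/
lemma concave_pair_le {D : Set ℝ} {f : ℝ → ℝ} (hf : ConcaveOn ℝ D f) {a b c d : ℝ}
    (ha : a ∈ D) (hd : d ∈ D) (hab : a ≤ b) (hac : a ≤ c) (hsum : a + d = b + c) :
    f a + f d ≤ f b + f c := by
  rcases eq_or_lt_of_le (show a ≤ d by linarith) with h | h
  · have hb : b = a := by linarith
    have hc : c = a := by linarith
    rw [hb, hc, ← h]
  · have hne : d - a ≠ 0 := by linarith
    have hpos : 0 < d - a := by linarith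
    have ht0 : 0 ≤ (d - b) / (d - a) := div_nonneg (by linarith) hpos.le
    have ht1 : 0 ≤ (b - a) / (d - a) := div_nonneg (by linarith) hpos.le
    have hts : (d - b) / (d - a) + (b - a) / (d - a) = 1 := by field_simp; ring
    have h1 := hf.2 ha hd ht0 ht1 hts
    have h2 := hf.2 ha hd ht1 ht0 (by linarith)
    have e1 : ((d - b) / (d - a)) • a + ((b - a) / (d - a)) • d = b := by
      simp only [smul_eq_mul]; field_simp; ring
    have e2 : ((b - a) / (d - a)) • a + ((d - b) / (d - a)) • d = c := by
      have : c = a + d - b := by linarith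
      simp only [smul_eq_mul, this]; field_simp; ring
    rw [e1] at h1
    rw [e2] at h2
    simp only [smul_eq_mul] at h1 h2
    have : f a + f d = ((d - b) / (d - a) + (b - a) / (d - a)) * (f a + f d) := by
      rw [hts, one_mul]
    nlinarith

/-- The slope of `log (1 + d) - log (1 - d)` from the origin is increasing in `d`, because its
power series in `d` has nonnegative coefficients. -/
lemma log_ratio_slope_mono {c d : ℝ} (hc : 0 < c) (hcd : c ≤ d) (hd : d < 1) :
    (Real.log (1 + c) - Real.log (1 - c)) / c ≤ (Real.log (1 + d) - Real.log (1 - d)) / d := by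
  have hd0 : 0 < d := hc.trans_le hcd
  have h1 := (Real.hasSum_log_sub_log_of_abs_lt_one (x := c)
    (by rw [abs_of_pos hc]; linarith)).div_const c
  have h2 := (Real.hasSum_log_sub_log_of_abs_lt_one (x := d)
    (by rw [abs_of_pos hd0]; linarith)).div_const d
  refine hasSum_le (fun k => ?_) h1 h2
  have e1 : ∀ x : ℝ, 0 < x → 2 * (1 / (2 * (k : ℝ) + 1)) * x ^ (2 * k + 1) / x
      = 2 * (1 / (2 * (k : ℝ) + 1)) * x ^ (2 * k) := by
    intro x hx
    rw [pow_succ]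
    field_simp
  rw [e1 c hc, e1 d hd0]
  gcongr

/-- The entropy of a two-point distribution is a concave function of the square `u` of the
difference of its two weights. -/
lemma concaveOn_binEntropy_sqrt :
    ConcaveOn ℝ (Set.Icc 0 1) (fun u : ℝ => Real.binEntropy ((1 + √u) / 2)) := by
  have hder : ∀ u ∈ Set.Ioo (0 : ℝ) 1,
      HasDerivAt (fun u : ℝ => Real.binEntropy ((1 + √u) / 2))
        (-(1 / 4) * ((Real.log (1 + √u) - Real.log (1 - √u)) / √u)) u := by
    rintro u ⟨hu0, hu1⟩
    have hs0 : 0 < √u := Real.sqrt_pos.2 hu0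
    have hs1 : √u < 1 := by rw [Real.sqrt_lt' one_pos]; simpa using hu1
    have h1 : HasDerivAt (fun u : ℝ => (1 + √u) / 2) (1 / (2 * √u) / 2) u :=
      ((Real.hasDerivAt_sqrt hu0.ne').const_add 1).div_const 2
    have h2 := (Real.hasDerivAt_binEntropy (p := (1 + √u) / 2) (by positivity)
      (by intro h; linarith)).comp u h1
    refine h2.congr_deriv ?_
    have e : 1 - (1 + √u) / 2 = (1 - √u) / 2 := by ring
    rw [e, Real.log_div (by linarith) two_ne_zero, Real.log_div (by linarith) two_ne_zero]
    field_simp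
    ring
  refine AntitoneOn.concaveOn_of_deriv (convex_Icc 0 1) ?_ ?_ ?_
  · exact (Real.binEntropy_continuous.comp (by fun_prop)).continuousOn
  · rw [interior_Icc]
    exact fun u hu => (hder u hu).differentiableAt.differentiableWithinAt
  · rw [interior_Icc]
    intro u hu v hv huv
    rw [(hder u hu).deriv, (hder v hv).deriv]
    have hs1 : √v < 1 := by rw [Real.sqrt_lt' one_pos]; simpa using hv.2
    have := log_ratio_slope_mono (Real.sqrt_pos.2 hu.1) (Real.sqrt_le_sqrt huv) hs1
    linarith

/-- Grouping: the entropy of two weights `p, q` of sum `s` splits off the entropy of `s`.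
The remaining term sees only the product `p * q`, through `((p - q) / s) ^ 2`. -/
lemma negMulLog_add_negMulLog {p q s : ℝ} (hp : 0 ≤ p) (hq : 0 ≤ q) (hs : p + q = s) :
    Real.negMulLog p + Real.negMulLog q
      = Real.negMulLog s + s * Real.binEntropy ((1 + √(((p - q) / s) ^ 2)) / 2) := by
  rcases eq_or_lt_of_le (show 0 ≤ s by linarith) with h | h
  · have hp0 : p = 0 := by linarith
    have hq0 : q = 0 := by linarith
    simp [hp0, hq0, ← h]
  · wlog hpq : q ≤ p generalizing p q
    · have := this hq hp (by linarith) (by linarith)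
      rw [add_comm, this]
      congr 5
      rw [← neg_sub p q, neg_div, neg_sq]
    rw [Real.sqrt_sq (div_nonneg (by linarith) h.le)]
    have e1 : (1 + (p - q) / s) / 2 = p / s := by field_simp; linarith
    have e2 : 1 - p / s = q / s := by field_simp; linarith
    rw [e1, Real.binEntropy_eq_negMulLog_add_negMulLog_one_sub, e2]
    have h1 := Real.negMulLog_mul s (p / s)
    have h2 := Real.negMulLog_mul s (q / s)
    rw [mul_div_cancel₀ _ h.ne'] at h1 h2
    rw [h1, h2]
    have : p / s + q / s = 1 := by field_simp; linarith
    linear_combination Real.negMulLog s * this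

/-- At fixed sum `s`, the pair entropy is concave as a function of the product, hence
subadditive up to its value `negMulLog s` at product zero. -/
lemma pair_entropy_subadd {p q x y p' q' s : ℝ} (hp : 0 ≤ p) (hq : 0 ≤ q) (hx : 0 ≤ x)
    (hy : 0 ≤ y) (hp' : 0 ≤ p') (hq' : 0 ≤ q') (hs : p + q = s) (hs' : x + y = s)
    (hs'' : p' + q' = s) (hprod : p * q = x * y + p' * q') :
    Real.negMulLog p + Real.negMulLog q + Real.negMulLog s
      ≤ (Real.negMulLog x + Real.negMulLog y) + (Real.negMulLog p' + Real.negMulLog q') := by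
  rcases eq_or_lt_of_le (show 0 ≤ s by linarith) with h | h
  · have h1 : p = 0 := by linarith
    have h2 : q = 0 := by linarith
    have h3 : x = 0 := by linarith
    have h4 : y = 0 := by linarith
    have h5 : p' = 0 := by linarith
    have h6 : q' = 0 := by linarith
    simp [h1, h2, h3, h4, h5, h6, ← h]
  · have key : ∀ a b : ℝ, a + b = s → ((a - b) / s) ^ 2 = 1 - 4 * (a * b) / s ^ 2 := by
      intro a b hab
      field_simp
      rw [← hab]; ring
    have hpq : 0 ≤ p' * q' := by positivity
    have hxy : 0 ≤ x * y := by positivity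
    have hle : 4 * (p * q) / s ^ 2 ≤ 1 := by
      rw [div_le_one (by positivity), ← hs]; nlinarith [sq_nonneg (p - q)]
    have h4 : (0 : ℝ) ≤ 4 * (p * q) / s ^ 2 := by positivity
    have hc := concave_pair_le concaveOn_binEntropy_sqrt
      (a := 1 - 4 * (p * q) / s ^ 2) (b := 1 - 4 * (x * y) / s ^ 2)
      (c := 1 - 4 * (p' * q') / s ^ 2) (d := 1)
      ⟨by linarith, by linarith⟩ ⟨zero_le_one, le_rfl⟩
      (by rw [hprod]; gcongr; linarith) (by rw [hprod]; gcongr; linarith) (by rw [hprod]; ring)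
    have h0 : Real.binEntropy ((1 + √1) / 2) = 0 := by
      norm_num
    simp only [h0] at hc
    rw [negMulLog_add_negMulLog hp hq hs, negMulLog_add_negMulLog hx hy hs',
      negMulLog_add_negMulLog hp' hq' hs'', key p q hs, key x y hs', key p' q' hs'']
    nlinarith [mul_le_mul_of_nonneg_left hc h.le]

lemma negMulLog_add_le {u v : ℝ} (hu : 0 ≤ u) (hv : 0 ≤ v) :
    Real.negMulLog (u + v) ≤ Real.negMulLog u + Real.negMulLog v := by
  have := concave_pair_le Real.concaveOn_negMulLog (a := 0) (b := u) (c := v) (d := u + v)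
    (by simp) (by simp; linarith) hu hv (by ring)
  simpa using this

/-- Mixing a bit with an independent bit does not decrease its entropy. -/
lemma binEntropy_le_convolution {a b : ℝ} (ha0 : 0 ≤ a) (ha1 : a ≤ 1) (hb0 : 0 ≤ b)
    (hb1 : b ≤ 1) : Real.binEntropy a ≤ Real.binEntropy (a * (1 - b) + b * (1 - a)) := by
  have hmem : 1 - a ∈ Set.Icc (0 : ℝ) 1 := ⟨by linarith, by linarith⟩
  have h := Real.strictConcave_binEntropy.concaveOn.2 ⟨ha0, ha1⟩ hmem
    (sub_nonneg.2 hb1) hb0 (by ring)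
  simp only [smul_eq_mul, Real.binEntropy_one_sub] at h
  rw [show a * (1 - b) + b * (1 - a) = (1 - b) * a + b * (1 - a) by ring]
  linarith

/-- A joint distribution `(p, r; t, q)` of two bits with determinant zero is a product
distribution, so its entropy is the sum of its marginal entropies, each bounded by the entropy of
the parity of the two bits. -/
lemma product_entropy_le {p q r t : ℝ} (hp : 0 ≤ p) (hq : 0 ≤ q) (hr : 0 ≤ r) (ht : 0 ≤ t)
    (hsum : p + q + (r + t) = 1) (hdet : p * q = r * t) :
    Real.negMulLog p + Real.negMulLog q + (Real.negMulLog r + Real.negMulLog t)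
      ≤ 2 * Real.binEntropy (r + t) := by
  have e1 : p = (p + r) * (p + t) := by linear_combination -p * hsum + hdet
  have e2 : q = (1 - (p + r)) * (1 - (p + t)) := by
    linear_combination e1 + hsum
  have e3 : r = (p + r) * (1 - (p + t)) := by linear_combination -e1
  have e4 : t = (1 - (p + r)) * (p + t) := by linear_combination -e1
  have e5 : r + t = (p + r) * (1 - (p + t)) + (p + t) * (1 - (p + r)) := by
    linear_combination e3 + e4
  have h1 := binEntropy_le_convolution (a := p + r) (b := p + t) (by linarith) (by linarith)
    (by linarith) (by linarith)
  have h2 := binEntropy_le_convolution (a := p + t) (b := p + r) (by linarith) (by linarith)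
    (by linarith) (by linarith)
  rw [← e5] at h1
  rw [add_comm (((p + t) * (1 - (p + r)))), ← e5] at h2
  rw [Real.binEntropy_eq_negMulLog_add_negMulLog_one_sub] at h1 h2
  have g1 := Real.negMulLog_mul (p + r) (p + t)
  have g2 := Real.negMulLog_mul (1 - (p + r)) (1 - (p + t))
  have g3 := Real.negMulLog_mul (p + r) (1 - (p + t))
  have g4 := Real.negMulLog_mul (1 - (p + r)) (p + t)
  rw [← e1] at g1
  rw [← e2] at g2
  rw [← e3] at g3
  rw [← e4] at g4
  rw [g1, g2, g3, g4]
  linarith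

/-- Existence of a pair of nonnegative numbers with prescribed sum and product. -/
lemma exists_pair_of_sum_prod {p q m : ℝ} (hp : 0 ≤ p) (hq : 0 ≤ q) (hm : 0 ≤ m)
    (hmk : m ≤ p * q) : ∃ p' q' : ℝ, 0 ≤ p' ∧ 0 ≤ q' ∧ p' + q' = p + q ∧ p' * q' = m := by
  have hD : 0 ≤ (p + q) ^ 2 - 4 * m := by nlinarith [sq_nonneg (p - q)]
  have hs : √((p + q) ^ 2 - 4 * m) ≤ p + q := by
    rw [Real.sqrt_le_left (by linarith)]; linarith
  refine ⟨(p + q + √((p + q) ^ 2 - 4 * m)) / 2, (p + q - √((p + q) ^ 2 - 4 * m)) / 2,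
    by positivity, by linarith, by ring, ?_⟩
  have := Real.sq_sqrt hD
  linear_combination -(1 / 4) * this

lemma pair_entropy_mono {x y x' y' : ℝ} (hx : 0 ≤ x) (hy : 0 ≤ y)
    (hsum : x + y = x' + y') (hprod : x * y ≤ x' * y') :
    Real.negMulLog x + Real.negMulLog y ≤ Real.negMulLog x' + Real.negMulLog y' := by
  wlog hxy : x ≤ y generalizing x y
  · have := this hy hx (by linarith) (by linarith) (by linarith)
    linarith
  -- The hypothesis on products says `(x' - x) * (x' - y) ≤ 0`.
  have h1 : (x' - x) * (y - x') ≥ 0 := by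
    have : y' = x + y - x' := by linarith
    subst this; nlinarith
  have h2 : x ≤ x' := by
    by_contra h
    push Not at h
    nlinarith
  have h3 : x' ≤ y := by
    by_contra h
    push Not at h
    nlinarith
  exact concave_pair_le Real.concaveOn_negMulLog hx hy h2 (by linarith) hsum

/-- The case `r * t ≤ p * q` of `xstate_entropy_le`, where the even block carries the larger
determinant. The extremal eigenvalues `x', y'` have product `p * q - r * t`; subadditivity then
replaces `p, q` by a pair `p', q'` with `p' * q' = r * t`, a product distribution. -/
lemma xstate_entropy_le_aux {p q r t x y u v : ℝ} (hp : 0 ≤ p) (hq : 0 ≤ q) (hr : 0 ≤ r)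
    (ht : 0 ≤ t) (hu : 0 ≤ u) (hv : 0 ≤ v)
    (hsum : p + q + (r + t) = 1) (hxy : x + y = p + q) (huv : u + v = r + t)
    (hz : p * q - x * y ≤ r * t) (hle : r * t ≤ p * q) :
    Real.negMulLog p + Real.negMulLog q + (Real.negMulLog r + Real.negMulLog t)
      ≤ (Real.negMulLog x + Real.negMulLog y) + (Real.negMulLog u + Real.negMulLog v)
        + Real.binEntropy (r + t) := by
  obtain ⟨p', q', hp', hq', hs', hm'⟩ :=
    exists_pair_of_sum_prod hp hq (mul_nonneg hr ht) hle
  obtain ⟨x', y', hx', hy', hsx, hmx⟩ :=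
    exists_pair_of_sum_prod hp hq (sub_nonneg.2 hle) (by nlinarith)
  have h1 := pair_entropy_subadd hp hq hx' hy' hp' hq' rfl hsx hs' (by linarith)
  have h2 := pair_entropy_mono hx' hy' (x' := x) (y' := y) (by linarith) (by linarith)
  have h3 := product_entropy_le hp' hq' hr ht (by linarith) hm'
  have h4 := negMulLog_add_le hu hv
  have h5 := Real.binEntropy_eq_negMulLog_add_negMulLog_one_sub (r + t)
  rw [show 1 - (r + t) = p + q by linarith] at h5
  rw [huv] at h4
  linarith

/-- The scalar form of the result. Here `p, q` and `r, t` are the diagonal entries of the even and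
odd parity blocks of an X-shaped state, `x, y` and `u, v` the eigenvalues of these blocks; the
last two hypotheses are positivity of the partial transpose. -/
lemma xstate_entropy_le {p q r t x y u v : ℝ} (hp : 0 ≤ p) (hq : 0 ≤ q) (hr : 0 ≤ r)
    (ht : 0 ≤ t) (hx : 0 ≤ x) (hy : 0 ≤ y) (hu : 0 ≤ u) (hv : 0 ≤ v)
    (hsum : p + q + (r + t) = 1) (hxy : x + y = p + q) (huv : u + v = r + t)
    (hz : p * q - x * y ≤ r * t) (hw : r * t - u * v ≤ p * q) :
    Real.negMulLog p + Real.negMulLog q + (Real.negMulLog r + Real.negMulLog t)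
      ≤ (Real.negMulLog x + Real.negMulLog y) + (Real.negMulLog u + Real.negMulLog v)
        + Real.binEntropy (r + t) := by
  rcases le_total (r * t) (p * q) with h | h
  · exact xstate_entropy_le_aux hp hq hr ht hu hv hsum hxy huv hz h
  · have := xstate_entropy_le_aux hr ht hp hq hx hy (by linarith) huv hxy hw h
    rw [show p + q = 1 - (r + t) by linarith, Real.binEntropy_one_sub] at this
    linarith

/-! ### Entropy of the dephased state -/

lemma vnEntropy_eq_roots {n : Type*} [Fintype n] [DecidableEq n] {A : Matrix n n ℂ}
    (hA : A.IsHermitian) :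
    vnEntropy A = (A.charpoly.roots.map fun z => Real.negMulLog z.re).sum / Real.log 2 := by
  rw [vnEntropy, dif_pos hA, hA.roots_charpoly_eq_eigenvalues, Multiset.map_map]
  change _ = (∑ i, Real.negMulLog (((hA.eigenvalues i : ℝ) : ℂ)).re) / Real.log 2
  rw [Finset.sum_div, ← Finset.sum_neg_distrib]
  refine Finset.sum_congr rfl fun i _ => ?_
  rw [Complex.ofReal_re, Real.negMulLog, Real.logb]
  ring

lemma vnEntropy_diagPart {n : Type*} [Fintype n] [DecidableEq n] {A : Matrix n n ℂ}
    (hA : A.IsHermitian) :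
    vnEntropy (diagPart A) = (∑ i, Real.negMulLog (A i i).re) / Real.log 2 := by
  have hD : (diagPart A).IsHermitian := by
    refine Matrix.isHermitian_diagonal_of_self_adjoint _ ?_
    ext i
    exact hA.apply i i
  rw [vnEntropy_eq_roots hD, diagPart, Matrix.charpoly_diagonal, Polynomial.roots_prod]
  · simp
  · simp [Finset.prod_ne_zero_iff, Polynomial.X_sub_C_ne_zero]

/-- The two basis labels of even parity. -/
def evenIdx : Fin 2 → Q2 := ![(0, 0), (1, 1)]

/-- The two basis labels of odd parity. -/
def oddIdx : Fin 2 → Q2 := ![(0, 1), (1, 0)]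

/-- The basis labels, sorted by parity. -/
def parityEquiv : Fin 2 ⊕ Fin 2 ≃ Q2 :=
  Equiv.ofBijective (Sum.elim evenIdx oddIdx) (by decide)

lemma dephase_apply (ρ : Matrix Q2 Q2 ℂ) (i j : Q2) :
    dephase ρ i j = if (i.1 = i.2 ↔ j.1 = j.2) then ρ i j else 0 := by
  simp only [dephase, PiPlus, PiMinus, Matrix.add_apply, Matrix.mul_diagonal,
    Matrix.diagonal_mul]
  by_cases hi : i.1 = i.2 <;> by_cases hj : j.1 = j.2 <;> simp [hi, hj]

lemma dephase_eq_reindex (ρ : Matrix Q2 Q2 ℂ) :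
    dephase ρ = Matrix.reindex parityEquiv parityEquiv
      (Matrix.fromBlocks (ρ.submatrix evenIdx evenIdx) 0 0 (ρ.submatrix oddIdx oddIdx)) := by
  rw [← Equiv.symm_apply_eq]
  ext i j
  rw [Matrix.reindex_symm, Matrix.reindex_apply, Matrix.submatrix_apply, dephase_apply]
  rcases i with i | i <;> rcases j with j | j <;> fin_cases i <;> fin_cases j <;>
    simp [parityEquiv, evenIdx, oddIdx] <;> rfl

lemma dephase_isHermitian {ρ : Matrix Q2 Q2 ℂ} (hρ : ρ.IsHermitian) :
    (dephase ρ).IsHermitian := by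
  ext i j
  rw [Matrix.conjTranspose_apply, dephase_apply, dephase_apply, ← hρ.apply i j]
  by_cases h : (i.1 = i.2 ↔ j.1 = j.2)
  · rw [if_pos h, if_pos h.symm]
  · rw [if_neg h, if_neg (fun h' => h h'.symm), star_zero]

lemma vnEntropy_dephase {ρ : Matrix Q2 Q2 ℂ} (hρ : ρ.IsHermitian) :
    vnEntropy (dephase ρ)
      = vnEntropy (ρ.submatrix evenIdx evenIdx) + vnEntropy (ρ.submatrix oddIdx oddIdx) := by
  rw [vnEntropy_eq_roots (dephase_isHermitian hρ), vnEntropy_eq_roots (hρ.submatrix _),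
    vnEntropy_eq_roots (hρ.submatrix _), dephase_eq_reindex, Matrix.charpoly_reindex,
    Matrix.charpoly_fromBlocks_zero₁₂, Polynomial.roots_mul, Multiset.map_add, Multiset.sum_add,
    add_div]
  exact mul_ne_zero (Matrix.charpoly_monic _).ne_zero (Matrix.charpoly_monic _).ne_zero

/-- The entropy of a positive semidefinite 2×2 matrix, in terms of its two eigenvalues. -/
lemma exists_vnEntropy_fin_two {P : Matrix (Fin 2) (Fin 2) ℂ} (hP : P.PosSemidef) :
    ∃ x y : ℝ, 0 ≤ x ∧ 0 ≤ y ∧ x + y = (P 0 0).re + (P 1 1).re ∧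
      x * y = (P 0 0).re * (P 1 1).re - Complex.normSq (P 0 1) ∧
      vnEntropy P = (Real.negMulLog x + Real.negMulLog y) / Real.log 2 := by
  have hH := hP.isHermitian
  refine ⟨hH.eigenvalues 0, hH.eigenvalues 1, hP.eigenvalues_nonneg 0, hP.eigenvalues_nonneg 1,
    ?_, ?_, ?_⟩
  · have h := congrArg Complex.re hH.trace_eq_sum_eigenvalues
    simpa [Matrix.trace_fin_two] using h.symm
  · have h := congrArg Complex.re hH.det_eq_prod_eigenvalues
    have h0 : (P 0 0).im = 0 := by
      have := congrArg Complex.im (hH.apply 0 0)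
      simp at this
      linarith
    have h10 : P 1 0 = star (P 0 1) := (hH.apply 1 0).symm
    rw [Matrix.det_fin_two, h10] at h
    simp [h0] at h
    rw [Complex.normSq_apply]
    linarith
  · rw [vnEntropy, dif_pos hH, Fin.sum_univ_two]
    simp only [Real.negMulLog, Real.logb]
    ring

/-! ### States with positive partial transpose -/

/-- Partial transpose over the second qubit. -/
def partialTranspose (ρ : Matrix Q2 Q2 ℂ) : Matrix Q2 Q2 ℂ :=
  Matrix.of fun i j => ρ (i.1, j.2) (j.1, i.2)

lemma normSq_le_of_posSemidef {n : Type*} {A : Matrix n n ℂ}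
    (hA : A.PosSemidef) (i j : n) : Complex.normSq (A i j) ≤ (A i i).re * (A j j).re := by
  obtain ⟨x, y, hx, hy, -, h, -⟩ := exists_vnEntropy_fin_two (hA.submatrix ![i, j])
  have : 0 ≤ x * y := mul_nonneg hx hy
  rw [h] at this
  simpa using this

lemma binEnt_eq (e : ℝ) : binEnt e = Real.binEntropy e / Real.log 2 := by
  rw [binEnt, Real.binEntropy_eq_negMulLog_add_negMulLog_one_sub]
  simp only [Real.negMulLog, Real.logb]
  ring

/-- The key rate is nonpositive already for states with positive partial transpose. -/
lemma keyRate_nonpos_of_ppt {ρ : Matrix Q2 Q2 ℂ} (hρ : ρ.PosSemidef)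
    (hΓ : (partialTranspose ρ).PosSemidef) (htr : ρ.trace = 1) : keyRate ρ ≤ 0 := by
  have hH := hρ.isHermitian
  obtain ⟨x, y, hx, hy, hxy, hxy', hS⟩ := exists_vnEntropy_fin_two (hρ.submatrix evenIdx)
  obtain ⟨u, v, hu, hv, huv, huv', hT⟩ := exists_vnEntropy_fin_two (hρ.submatrix oddIdx)
  simp only [Matrix.submatrix_apply, evenIdx, oddIdx, Matrix.cons_val_zero,
    Matrix.cons_val_one] at hxy hxy' huv huv'
  have hz := normSq_le_of_posSemidef hΓ (0, 1) (1, 0)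
  have hw := normSq_le_of_posSemidef hΓ (0, 0) (1, 1)
  simp only [partialTranspose, Matrix.of_apply] at hz hw
  have hnn : ∀ i, 0 ≤ (ρ i i).re := fun i => (Complex.nonneg_iff.1 (hρ.diag_nonneg (i := i))).1
  have hsum : (ρ (0, 0) (0, 0)).re + (ρ (1, 1) (1, 1)).re
      + ((ρ (0, 1) (0, 1)).re + (ρ (1, 0) (1, 0)).re) = 1 := by
    have h := congrArg Complex.re htr
    simp [Matrix.trace, Fintype.sum_prod_type, Fin.sum_univ_two] at h
    linarith
  have he : (PiMinus * ρ).trace.re = (ρ (0, 1) (0, 1)).re + (ρ (1, 0) (1, 0)).re := by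
    simp [PiMinus, Matrix.trace, Fintype.sum_prod_type, Fin.sum_univ_two, Matrix.diagonal_mul]
  have hdiag : ∀ i, dephase ρ i i = ρ i i := fun i => by simp [dephase_apply]
  have hmain := xstate_entropy_le (hnn (0, 0)) (hnn (1, 1)) (hnn (0, 1)) (hnn (1, 0))
    hx hy hu hv hsum hxy huv (by linarith) (by linarith)
  rw [keyRate, relEntCoh, vnEntropy_diagPart (dephase_isHermitian hH), vnEntropy_dephase hH,
    hS, hT, he, binEnt_eq, ← add_div, ← sub_div, ← sub_div]
  refine div_nonpos_of_nonpos_of_nonneg ?_ (Real.log_nonneg one_le_two)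
  simp only [hdiag, Fintype.sum_prod_type, Fin.sum_univ_two]
  linarith

/-! ### Separable states -/

lemma IsDensity.conj_unitary {σ U : Matrix (Fin 2) (Fin 2) ℂ} (hσ : IsDensity σ)
    (hU : U ∈ Matrix.unitaryGroup (Fin 2) ℂ) : IsDensity (U * σ * Uᴴ) := by
  refine ⟨hσ.1.mul_mul_conjTranspose_same U, ?_⟩
  have hU' : Uᴴ * U = 1 := Matrix.mem_unitaryGroup_iff'.1 hU
  rw [Matrix.trace_mul_comm, ← Matrix.mul_assoc, hU', Matrix.one_mul, hσ.2]

lemma keyRate_separable_nonpos {n : ℕ} {p : Fin n → ℝ}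
    {σA σB : Fin n → Matrix (Fin 2) (Fin 2) ℂ} (hp : ∀ i, 0 ≤ p i) (hpsum : ∑ i, p i = 1)
    (hA : ∀ i, IsDensity (σA i)) (hB : ∀ i, IsDensity (σB i)) :
    keyRate (∑ i, ((p i : ℝ) : ℂ) • (σA i ⊗ₖ σB i)) ≤ 0 := by
  have hp' : ∀ i, (0 : ℂ) ≤ ((p i : ℝ) : ℂ) := fun i => by exact_mod_cast hp i
  apply keyRate_nonpos_of_ppt
  · exact Matrix.posSemidef_sum _ fun i _ => ((hA i).1.kronecker (hB i).1).smul (hp' i)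
  · have : partialTranspose (∑ i, ((p i : ℝ) : ℂ) • (σA i ⊗ₖ σB i))
        = ∑ i, ((p i : ℝ) : ℂ) • (σA i ⊗ₖ (σB i)ᵀ) := by
      ext i j
      simp [partialTranspose, Matrix.sum_apply, Matrix.kroneckerMap_apply]
    rw [this]
    exact Matrix.posSemidef_sum _ fun i _ =>
      ((hA i).1.kronecker (hB i).1.transpose).smul (hp' i)
  · rw [Matrix.trace_sum]
    simp only [Matrix.trace_smul, Matrix.trace_kronecker, (hA _).2, (hB _).2, mul_one,
      smul_eq_mul]
    exact_mod_cast hpsum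

/-- separable states have nonpositive basis-optimized key rate. -/
theorem stmt_17 (n : ℕ) (p : Fin n → ℝ) (σA σB : Fin n → Matrix (Fin 2) (Fin 2) ℂ)
    (hp : ∀ i, 0 ≤ p i) (hpsum : ∑ i, p i = 1)
    (hA : ∀ i, IsDensity (σA i)) (hB : ∀ i, IsDensity (σB i))
    (ρ : Matrix Q2 Q2 ℂ) (hρ : ρ = ∑ i, ((p i : ℝ) : ℂ) • (σA i ⊗ₖ σB i)) :
    Km ρ ≤ 0 := by
  refine Real.sSup_nonpos ?_
  rintro x ⟨U, V, hU, hV, rfl⟩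
  -- A local basis change maps a separable decomposition to a separable decomposition.
  have h : (U ⊗ₖ V) * ρ * (U ⊗ₖ V)ᴴ
      = ∑ i, ((p i : ℝ) : ℂ) • ((U * σA i * Uᴴ) ⊗ₖ (V * σB i * Vᴴ)) := by
    rw [hρ, Finset.mul_sum, Finset.sum_mul]
    refine Finset.sum_congr rfl fun i _ => ?_
    rw [Matrix.mul_smul, Matrix.smul_mul, Matrix.conjTranspose_kronecker,
      ← Matrix.mul_kronecker_mul, ← Matrix.mul_kronecker_mul]
  rw [h]
  exact keyRate_separable_nonpos hp hpsum (fun i => (hA i).conj_unitary hU)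
    (fun i => (hB i).conj_unitary hV)

end
end

section
/- Let ρ be a two-qubit density matrix whose diagonal entries in the computational basis satisfy ⟨00|ρ|00⟩ = ⟨11|ρ|11⟩ and ⟨01|ρ|01⟩ = ⟨10|ρ|10⟩ (symmetric attack). Let η₀, η₁ ∈ (0,1] and let F_z = I ⊗ (√η₀ |0⟩⟨0| + √η₁ |1⟩⟨1|) act on the second qubit, and define the filtered state ρ^Z = F_z ρ F_z / Tr(F_z ρ F_z). Then the phase error rate of the filtered state is e_p' := Tr(Π_x⁻ ρ^Z) = 1/2 − (2√(η₀η₁)/(η₀+η₁)) · (1/2 − Tr(Π_x⁻ ρ)). -/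
/-!
Since `Π_x⁻ = (I - X ⊗ X) / 2`, the phase error rate of a state depends only on its trace and on
the sum of its antidiagonal entries (`trace_piXMinus_mul`). Every antidiagonal entry couples
`|0⟩` with `|1⟩` on the B qubit, so the filter multiplies all of them by `√η₀ √η₁ = √(η₀ η₁)`.
For a symmetric attack the B marginal is uniform on the diagonal, so the filter passes with
probability `(η₀ + η₁) / 2`. The ratio of the two is the factor in the claim.
-/

open Matrix Complex Kronecker
open scoped ComplexOrder

noncomputable section

/-- Filtering operator F_z = I ⊗ (√η₀ |0⟩⟨0| + √η₁ |1⟩⟨1|) modelling mismatched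
detector efficiencies on the B side. -/
noncomputable def Fz (η₀ η₁ : ℝ) : Matrix Q2 Q2 ℂ :=
  Matrix.diagonal fun i => if i.2 = 0 then ((Real.sqrt η₀ : ℝ) : ℂ) else ((Real.sqrt η₁ : ℝ) : ℂ)

/-- The sum of the antidiagonal entries, i.e. `Tr((X ⊗ X) M)`. -/
def antidiagSum (M : Matrix Q2 Q2 ℂ) : ℂ :=
  M (0,0) (1,1) + M (0,1) (1,0) + M (1,0) (0,1) + M (1,1) (0,0)

lemma trace_piXMinus_mul (M : Matrix Q2 Q2 ℂ) :
    (PiXMinus * M).trace = (M.trace - antidiagSum M) / 2 := by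
  simp [Matrix.trace, Matrix.mul_apply, Fintype.sum_prod_type, PiXMinus, antidiagSum]
  ring

lemma antidiagSum_smul (c : ℂ) (M : Matrix Q2 Q2 ℂ) :
    antidiagSum (c • M) = c * antidiagSum M := by
  simp only [antidiagSum, Matrix.smul_apply, smul_eq_mul]
  ring

lemma antidiagSum_filter (ρ : Matrix Q2 Q2 ℂ) {η₀ : ℝ} (hη₀ : 0 ≤ η₀) (η₁ : ℝ) :
    antidiagSum (Fz η₀ η₁ * ρ * Fz η₀ η₁) = (Real.sqrt (η₀ * η₁) : ℂ) * antidiagSum ρ := by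
  rw [Real.sqrt_mul hη₀]
  simp [antidiagSum, Fz, Matrix.mul_diagonal, Matrix.diagonal_mul]
  ring

/-- Under a symmetric attack each outcome on the B qubit has probability `1 / 2`, so the filter
succeeds with the average of the two efficiencies. -/
lemma trace_filter (ρ : Matrix Q2 Q2 ℂ) (htr : ρ.trace = 1)
    (hsym1 : ρ (0,0) (0,0) = ρ (1,1) (1,1)) (hsym2 : ρ (0,1) (0,1) = ρ (1,0) (1,0))
    {η₀ η₁ : ℝ} (hη₀ : 0 ≤ η₀) (hη₁ : 0 ≤ η₁) :
    (Fz η₀ η₁ * ρ * Fz η₀ η₁).trace = ((η₀ : ℂ) + η₁) / 2 := by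
  have h0 : (Real.sqrt η₀ : ℂ) * Real.sqrt η₀ = η₀ := by
    rw [← Complex.ofReal_mul, Real.mul_self_sqrt hη₀]
  have h1 : (Real.sqrt η₁ : ℂ) * Real.sqrt η₁ = η₁ := by
    rw [← Complex.ofReal_mul, Real.mul_self_sqrt hη₁]
  simp [Matrix.trace, Fintype.sum_prod_type] at htr
  simp [Matrix.trace, Fintype.sum_prod_type, Fz, Matrix.mul_diagonal, Matrix.diagonal_mul]
  rw [← hsym1, ← hsym2] at htr ⊢
  linear_combination (ρ (0,0) (0,0) + ρ (0,1) (0,1)) * (h0 + h1) + ((η₀ : ℂ) + η₁) / 2 * htr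

/-- phase error rate of the filtered state under a symmetric attack. -/
theorem stmt_19 (ρ : Matrix Q2 Q2 ℂ) (hρ : IsDensity ρ)
    (hsym1 : ρ (0,0) (0,0) = ρ (1,1) (1,1)) (hsym2 : ρ (0,1) (0,1) = ρ (1,0) (1,0))
    (η₀ η₁ : ℝ) (hη₀ : 0 < η₀) (hη₀1 : η₀ ≤ 1) (hη₁ : 0 < η₁) (hη₁1 : η₁ ≤ 1) :
    (PiXMinus * (((Fz η₀ η₁ * ρ * Fz η₀ η₁).trace)⁻¹ • (Fz η₀ η₁ * ρ * Fz η₀ η₁))).trace =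
      1/2 - ((2 * Real.sqrt (η₀ * η₁) / (η₀ + η₁) : ℝ) : ℂ)
        * (1/2 - (PiXMinus * ρ).trace) := by
  have hne : (η₀ : ℂ) + η₁ ≠ 0 := by exact_mod_cast (add_pos hη₀ hη₁).ne'
  rw [trace_piXMinus_mul, trace_piXMinus_mul, Matrix.trace_smul, antidiagSum_smul,
    antidiagSum_filter ρ hη₀.le, trace_filter ρ hρ.2 hsym1 hsym2 hη₀.le hη₁.le, hρ.2]
  push_cast
  simp only [smul_eq_mul]
  field_simp
  ring

end
end
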